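/- For j ∈ {0, 1}, let T_n(j) denote the number of sequences (a₁, …, a_n) with each a_i ∈ {−1, 0, 1} and a₁ + ⋯ + a_n = j. Then (T_n(0) − T_n(1)) · n^{3/2} / 3^n converges to 3√3/(8√π) as n → ∞. -/

import Mathlib

open Filter

lemma aux_pt (n : ℕ) (j : ℤ) (x : ℝ) :
    ∑ a ∈ Fintype.piFinset (fun _ : Fin n => ({-1, 0, 1} : Finset ℤ)),
      Real.cos ((((∑ i, a i) - j : ℤ) : ℝ) * x) = Real.cos (j * x) * (1 + 2 * Real.cos x) ^ n := by
  have h1 : ∑ a ∈ Fintype.piFinset (fun _ : Fin n => ({-1, 0, 1} : Finset ℤ)),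
      Complex.exp ((((∑ i, a i) - j : ℤ) : ℝ) * x * Complex.I)
      = Complex.exp (((-j * x : ℝ) : ℂ) * Complex.I) * (((1 + 2 * Real.cos x) ^ n : ℝ) : ℂ) := by
    have h2 : (((1 + 2 * Real.cos x) : ℝ) : ℂ)
        = ∑ k ∈ ({-1, 0, 1} : Finset ℤ), Complex.exp ((k : ℂ) * x * Complex.I) := by
      rw [Finset.sum_insert (by decide), Finset.sum_insert (by decide), Finset.sum_singleton]
      push_cast
      rw [Complex.cos]
      simp
      ring
    rw [Complex.ofReal_pow, h2]
    have h3 := Finset.prod_univ_sum (fun _ : Fin n => ({-1, 0, 1} : Finset ℤ))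
      (fun _ k => Complex.exp ((k : ℂ) * x * Complex.I))
    rw [Finset.prod_const, Finset.card_univ, Fintype.card_fin] at h3
    rw [h3, Finset.mul_sum]
    refine Finset.sum_congr rfl fun a _ => ?_
    rw [← Complex.exp_sum, ← Complex.exp_add]
    congr 1
    push_cast
    rw [← Finset.sum_mul, ← Finset.sum_mul]
    ring
  have h4 := congrArg Complex.re h1
  rw [Complex.re_sum, Complex.re_mul_ofReal, Complex.exp_ofReal_mul_I_re] at h4
  rw [neg_mul, Real.cos_neg] at h4
  rw [← h4]
  refine Finset.sum_congr rfl fun a _ => ?_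
  rw [← Complex.ofReal_mul, Complex.exp_ofReal_mul_I_re]

lemma aux_int (k : ℤ) : ∫ x in (0:ℝ)..Real.pi, Real.cos (k * x) = if k = 0 then Real.pi else 0 := by
  split_ifs with h
  · simp [h]
  · have hk : (k : ℝ) ≠ 0 := by exact_mod_cast h
    rw [intervalIntegral.integral_comp_mul_left (fun x => Real.cos x) hk]
    simp [Real.sin_int_mul_pi]

lemma aux_T (n : ℕ) (j : ℤ) : (Set.ncard {a : Fin n → ℤ |
        (∀ i, a i = -1 ∨ a i = 0 ∨ a i = 1) ∧ (∑ i, a i) = j} : ℝ) * Real.pi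
    = ∫ x in (0:ℝ)..Real.pi, Real.cos (j * x) * (1 + 2 * Real.cos x) ^ n := by
  simp_rw [← aux_pt]
  rw [intervalIntegral.integral_finsetSum]
  swap
  · intro i _
    exact (by fun_prop : Continuous _).intervalIntegrable _ _
  simp_rw [aux_int, sub_eq_zero]
  rw [← Finset.sum_filter, Finset.sum_const, nsmul_eq_mul]
  congr 2
  rw [← Set.ncard_coe_finset]
  congr 1
  ext a
  simp

lemma aux_bd (x : ℝ) (h0 : 0 ≤ x) (h1 : x ≤ Real.pi) (n : ℕ) :
    |((1 + 2 * Real.cos x) / 3) ^ n| ≤ Real.exp (-(2 / (3 * Real.pi ^ 2)) * (n * x ^ 2)) := by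
  have hp := Real.pi_pos
  have hc : |(1 + 2 * Real.cos x) / 3| ≤ Real.exp (-(2 / (3 * Real.pi ^ 2)) * x ^ 2) := by
    refine le_trans ?_ (Real.add_one_le_exp _)
    have hq := Real.cos_le_one_sub_mul_cos_sq (x := x) (by rw [abs_of_nonneg h0]; exact h1)
    have hm := Real.neg_one_le_cos x
    have hy : x ^ 2 / Real.pi ^ 2 ≤ 1 := by
      rw [div_le_one (by positivity)]; gcongr
    have hy0 : 0 ≤ x ^ 2 / Real.pi ^ 2 := by positivity
    have e1 : 2 / Real.pi ^ 2 * x ^ 2 = 2 * (x ^ 2 / Real.pi ^ 2) := by ring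
    have e2 : -(2 / (3 * Real.pi ^ 2)) * x ^ 2 = -(2 / 3) * (x ^ 2 / Real.pi ^ 2) := by
      field_simp
    rw [e1] at hq
    rw [e2, abs_le]
    constructor <;> linarith
  rw [abs_pow]
  calc _ ≤ (Real.exp (-(2 / (3 * Real.pi ^ 2)) * x ^ 2)) ^ n := by gcongr
    _ = _ := by rw [← Real.exp_nat_mul]; congr 1; ring

lemma aux_cos (t : ℝ) :
    Tendsto (fun n : ℕ => (n : ℝ) * (1 - Real.cos (t / Real.sqrt n))) atTop (nhds (t ^ 2 / 2)) := by
  rw [tendsto_iff_norm_sub_tendsto_zero]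
  have hs : Tendsto (fun n : ℕ => t / Real.sqrt n) atTop (nhds 0) :=
    tendsto_const_nhds.div_atTop (Real.tendsto_sqrt_atTop.comp tendsto_natCast_atTop_atTop)
  have hz : Tendsto (fun n : ℕ => (t ^ 4 * (5 / 96)) / (n : ℝ)) atTop (nhds 0) :=
    tendsto_const_nhds.div_atTop tendsto_natCast_atTop_atTop
  refine squeeze_zero' (Eventually.of_forall fun n => norm_nonneg _) ?_ hz
  have hs1 : ∀ᶠ n : ℕ in atTop, |t / Real.sqrt n| ≤ 1 := by
    have := hs.abs
    rw [abs_zero] at this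
    exact this.eventually_le_const zero_lt_one
  filter_upwards [hs1, eventually_gt_atTop 0] with n hn hpos
  have hn' : (0 : ℝ) < n := by exact_mod_cast hpos
  have hb := Real.cos_bound hn
  have hsq : Real.sqrt n ^ 2 = n := Real.sq_sqrt hn'.le
  have e1 : (t / Real.sqrt n) ^ 2 = t ^ 2 / n := by rw [div_pow, hsq]
  have e2 : |t / Real.sqrt n| ^ 4 = t ^ 4 / n ^ 2 := by
    rw [show |t / Real.sqrt n| ^ 4 = (|t / Real.sqrt n| ^ 2) ^ 2 by ring, sq_abs, e1]; ring
  rw [e1, e2] at hb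
  rw [Real.norm_eq_abs]
  have e3 : (n : ℝ) * (1 - Real.cos (t / Real.sqrt n)) - t ^ 2 / 2
      = -(n * (Real.cos (t / Real.sqrt n) - (1 - t ^ 2 / n / 2))) := by
    field_simp; ring
  rw [e3, abs_neg, abs_mul, abs_of_pos hn']
  calc _ ≤ (n : ℝ) * (t ^ 4 / n ^ 2 * (5 / 96)) := by gcongr
    _ = _ := by field_simp

lemma aux_lim (t : ℝ) :
    Tendsto (fun n : ℕ => (n : ℝ) * (1 - Real.cos (t / Real.sqrt n)) *
      ((1 + 2 * Real.cos (t / Real.sqrt n)) / 3) ^ n) atTop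
      (nhds (t ^ 2 / 2 * Real.exp (-(1/3) * t ^ 2))) := by
  refine (aux_cos t).mul ?_
  have h := Real.tendsto_one_add_pow_exp_of_tendsto
    (g := fun n : ℕ => -(2/3) * (1 - Real.cos (t / Real.sqrt n))) (t := -(1/3) * t ^ 2) ?_
  · refine h.congr fun n => ?_
    congr 1; ring
  · have := (aux_cos t).const_mul (-(2/3))
    convert this using 2 <;> ring

lemma aux_gauss (b : ℝ) (hb : 0 < b) :
    MeasureTheory.IntegrableOn (fun t : ℝ => t ^ 2 / 2 * Real.exp (-b * t ^ 2)) (Set.Ioi 0) := by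
  have h := integrableOn_rpow_mul_exp_neg_mul_sq hb (s := 2) (by norm_num)
  refine (h.const_mul (1/2)).congr (Eventually.of_forall fun t => ?_)
  simp only [Real.rpow_two]; ring

lemma aux_val : ∫ t in Set.Ioi (0:ℝ), t ^ 2 / 2 * Real.exp (-(1/3) * t ^ 2)
    = Real.pi * (3 * Real.sqrt 3 / (8 * Real.sqrt Real.pi)) := by
  have h := integral_rpow_mul_exp_neg_mul_rpow (p := 2) (q := 2) (b := 1/3)
    (by norm_num) (by norm_num) (by norm_num)
  have hg : Real.Gamma ((2 + 1) / 2) = Real.sqrt Real.pi / 2 := by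
    rw [show ((2:ℝ) + 1) / 2 = 1 / 2 + 1 by norm_num, Real.Gamma_add_one (by norm_num),
      Real.Gamma_one_half_eq]; ring
  have h3 : (1 / 3 : ℝ) ^ (-((2:ℝ) + 1) / 2) = 3 * Real.sqrt 3 := by
    rw [show -((2:ℝ) + 1) / 2 = -(1 + 1/2) by norm_num, one_div, Real.inv_rpow (by norm_num),
      Real.rpow_neg (by norm_num), inv_inv, Real.rpow_add (by norm_num), Real.rpow_one,
      Real.sqrt_eq_rpow]
  rw [hg, h3] at h
  simp only [Real.rpow_two] at h
  have e : ∀ t : ℝ, t ^ 2 / 2 * Real.exp (-(1/3) * t ^ 2)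
      = 1 / 2 * (t ^ 2 * Real.exp (-(1/3) * t ^ 2)) := fun t => by ring
  simp_rw [e]
  rw [MeasureTheory.integral_const_mul, h]
  have hp : Real.sqrt Real.pi * Real.sqrt Real.pi = Real.pi := Real.mul_self_sqrt Real.pi_pos.le
  have hp0 : Real.sqrt Real.pi ≠ 0 := (Real.sqrt_pos.2 Real.pi_pos).ne'
  nth_rewrite 2 [← hp]
  field_simp
  norm_num

lemma aux_DCT :
    Tendsto (fun n : ℕ => ∫ t in Set.Ioi (0:ℝ),
      (Set.Ioc 0 (Real.pi * Real.sqrt n)).indicator (fun t => (n : ℝ) *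
        (1 - Real.cos (t / Real.sqrt n)) * ((1 + 2 * Real.cos (t / Real.sqrt n)) / 3) ^ n) t) atTop
      (nhds (Real.pi * (3 * Real.sqrt 3 / (8 * Real.sqrt Real.pi)))) := by
  rw [← aux_val]
  refine MeasureTheory.tendsto_integral_of_dominated_convergence
    (fun t => t ^ 2 / 2 * Real.exp (-(2 / (3 * Real.pi ^ 2)) * t ^ 2)) ?_ ?_ ?_ ?_
  · intro n
    exact ((by fun_prop : Measurable _).indicator measurableSet_Ioc).aestronglyMeasurable
  · exact aux_gauss _ (by have := Real.pi_pos; positivity)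
  · intro n
    refine Eventually.of_forall fun t => ?_
    by_cases ht : t ∈ Set.Ioc 0 (Real.pi * Real.sqrt n)
    · rw [Set.indicator_of_mem ht]
      have hs : 0 < Real.sqrt n := by
        have := ht.1.trans_le ht.2
        exact (mul_pos_iff_of_pos_left Real.pi_pos).1 this
      have hn : (0 : ℝ) < n := Real.sqrt_pos.1 hs
      have hx0 : 0 ≤ t / Real.sqrt n := div_nonneg ht.1.le hs.le
      have hx1 : t / Real.sqrt n ≤ Real.pi := (div_le_iff₀ hs).2 ht.2
      have hb := aux_bd _ hx0 hx1 n
      have e : (n : ℝ) * (t / Real.sqrt n) ^ 2 = t ^ 2 := by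
        rw [div_pow, Real.sq_sqrt hn.le]; field_simp
      rw [e] at hb
      rw [norm_mul, Real.norm_eq_abs, Real.norm_eq_abs]
      have hc := Real.one_sub_sq_div_two_le_cos (x := t / Real.sqrt n)
      have hc1 := Real.cos_le_one (t / Real.sqrt n)
      rw [abs_of_nonneg (mul_nonneg hn.le (by linarith))]
      gcongr
      rw [← e]
      nlinarith
    · rw [Set.indicator_of_notMem ht, norm_zero]
      positivity
  · filter_upwards [MeasureTheory.ae_restrict_mem measurableSet_Ioi] with t ht
    refine (aux_lim t).congr' ?_
    have hs : Tendsto (fun n : ℕ => Real.pi * Real.sqrt n) atTop atTop :=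
      (Real.tendsto_sqrt_atTop.comp tendsto_natCast_atTop_atTop).const_mul_atTop Real.pi_pos
    filter_upwards [hs.eventually_ge_atTop t] with n hn
    rw [Set.indicator_of_mem (show t ∈ Set.Ioc 0 (Real.pi * Real.sqrt n) from ⟨ht, hn⟩)]

/-- With T n j the number of sequences in {−1,0,1}^n summing to j,
(T_n(0) − T_n(1)) · n^{3/2} / 3^n → 3√3/(8√π) as n → ∞. -/
theorem stmt_14 (T : ℕ → ℤ → ℕ)
    (hT : ∀ n j, T n j = Set.ncard {a : Fin n → ℤ |
        (∀ i, a i = -1 ∨ a i = 0 ∨ a i = 1) ∧ (∑ i, a i) = j}) :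
    Tendsto (fun n : ℕ => ((T n 0 : ℝ) - (T n 1 : ℝ)) * (n : ℝ) ^ ((3 : ℝ) / 2) / 3 ^ n)
      atTop (nhds (3 * Real.sqrt 3 / (8 * Real.sqrt Real.pi))) := by
  have h := aux_DCT.const_mul (1 / Real.pi)
  have hp := Real.pi_pos
  rw [← mul_assoc, one_div_mul_cancel hp.ne', one_mul] at h
  refine h.congr' ?_
  filter_upwards [eventually_gt_atTop 0] with n hpos
  have hn : (0 : ℝ) < n := by exact_mod_cast hpos
  have hs : 0 < Real.sqrt n := Real.sqrt_pos.2 hn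
  have h0 := aux_T n 0
  have h1 := aux_T n 1
  rw [← hT] at h0 h1
  have hd : ((T n 0 : ℝ) - T n 1) * Real.pi
      = ∫ x in (0:ℝ)..Real.pi, (1 - Real.cos x) * (1 + 2 * Real.cos x) ^ n := by
    rw [sub_mul, h0, h1, ← intervalIntegral.integral_sub]
    · congr 1; ext x; push_cast; simp; ring
    · exact (by fun_prop : Continuous _).intervalIntegrable _ _
    · exact (by fun_prop : Continuous _).intervalIntegrable _ _
  rw [MeasureTheory.setIntegral_indicator measurableSet_Ioc,
    Set.inter_eq_self_of_subset_right Set.Ioc_subset_Ioi_self,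
    ← intervalIntegral.integral_of_le (by positivity)]
  rw [intervalIntegral.integral_comp_div (fun x => (n : ℝ) *
        (1 - Real.cos x) * ((1 + 2 * Real.cos x) / 3) ^ n) hs.ne', zero_div,
        mul_div_cancel_right₀ _ hs.ne']
  have e : ∀ x : ℝ, (n : ℝ) * (1 - Real.cos x) * ((1 + 2 * Real.cos x) / 3) ^ n
      = (n / 3 ^ n) * ((1 - Real.cos x) * (1 + 2 * Real.cos x) ^ n) := fun x => by
    rw [div_pow]; ring
  simp_rw [e]
  rw [intervalIntegral.integral_const_mul, ← hd, smul_eq_mul,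
    show (3 : ℝ) / 2 = 1 + 1 / 2 by norm_num, Real.rpow_add hn, Real.rpow_one, ← Real.sqrt_eq_rpow]
  field_simp
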